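/- Let P and Q be TRAPs and φ : P → Q a family of maps compatible with the S×S^op actions (φ(σ·x·τ) = σ·φ(x)·τ) and with the horizontal concatenation and unit, and satisfying t_{1,1} ∘ φ(x) = φ ∘ t_{1,1}(x) for all x ∈ P(k,l) with k,l ≥ 1. Then φ commutes with every partial trace map: φ ∘ t_{i,j} = t_{i,j} ∘ φ for all admissible i,j, so φ is a morphism of TRAPs. -/

import Mathlib

open Equiv

/-- The block sum `σ ⊗ τ ∈ S_{m+n}` of two permutations. -/
def osum {m n : ℕ} (σ : Equiv.Perm (Fin m)) (τ : Equiv.Perm (Fin n)) :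
    Equiv.Perm (Fin (m + n)) :=
  finSumFinEquiv.symm.trans ((Equiv.sumCongr σ τ).trans finSumFinEquiv)

/-- The block-swap permutation `c_{m,n} ∈ S_{m+n}` (`i ↦ i+n` if `i < m`, `i ↦ i−m`
otherwise, 0-indexed). -/
def cPerm (m n : ℕ) : Equiv.Perm (Fin (m + n)) :=
  finSumFinEquiv.symm.trans ((Equiv.sumComm (Fin m) (Fin n)).trans
    (finSumFinEquiv.trans (finCongr (Nat.add_comm n m))))

/-- The permutation `σ_p ∈ S_n` obtained from `σ ∈ S_{n+1}` by deleting the letter `p`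
from the word of `σ` and shifting all larger letters down by one. -/
def delPerm {n : ℕ} (σ : Equiv.Perm (Fin (n + 1))) (p : Fin (n + 1)) :
    Equiv.Perm (Fin n) :=
  Equiv.removeNone ((finSuccEquiv' (σ⁻¹ p)).symm.trans (σ.trans (finSuccEquiv' p)))

/-- A family `P(k,l)` of `S_l × S_k^{op}`-modules equipped with an associative, unital,
equivariant, commutative horizontal concatenation `*` and partial trace maps `t_{i,j}`
satisfying the commutation axiom 3(a) and the equivariance axiom 3(b) of TRAPs
(everything in the definition of a TRAP except the compatibility axiom 3(c) of the
partial traces with the horizontal concatenation). -/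
structure PreTRAP where
  P : ℕ → ℕ → Type
  /-- left action of `S_l` on `P(k,l)` -/
  actL : ∀ {k l : ℕ}, Equiv.Perm (Fin l) → P k l → P k l
  /-- right action of `S_k` on `P(k,l)` -/
  actR : ∀ {k l : ℕ}, P k l → Equiv.Perm (Fin k) → P k l
  actL_one : ∀ {k l : ℕ} (p : P k l), actL 1 p = p
  actR_one : ∀ {k l : ℕ} (p : P k l), actR p 1 = p
  actL_mul : ∀ {k l : ℕ} (σ σ' : Equiv.Perm (Fin l)) (p : P k l),
    actL σ (actL σ' p) = actL (σ * σ') p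
  actLR : ∀ {k l : ℕ} (σ : Equiv.Perm (Fin l)) (τ : Equiv.Perm (Fin k)) (p : P k l),
    actL σ (actR p τ) = actR (actL σ p) τ
  actR_mul : ∀ {k l : ℕ} (τ τ' : Equiv.Perm (Fin k)) (p : P k l),
    actR (actR p τ) τ' = actR p (τ * τ')
  /-- the horizontal concatenation -/
  hmul : ∀ {k l k' l' : ℕ}, P k l → P k' l' → P (k + k') (l + l')
  /-- the unit of the horizontal concatenation -/
  I0 : P 0 0
  hmul_assoc : ∀ {k l k' l' k'' l'' : ℕ} (p : P k l) (p' : P k' l') (p'' : P k'' l''),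
    HEq (hmul (hmul p p') p'') (hmul p (hmul p' p''))
  I0_hmul : ∀ {k l : ℕ} (p : P k l), HEq (hmul I0 p) p
  hmul_I0 : ∀ {k l : ℕ} (p : P k l), hmul p I0 = p
  hmul_equivariant : ∀ {k l k' l' : ℕ} (p : P k l) (p' : P k' l')
    (σ : Equiv.Perm (Fin l)) (τ : Equiv.Perm (Fin k))
    (σ' : Equiv.Perm (Fin l')) (τ' : Equiv.Perm (Fin k')),
    hmul (actL σ (actR p τ)) (actL σ' (actR p' τ'))
      = actL (osum σ σ') (actR (hmul p p') (osum τ τ'))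
  hmul_comm : ∀ {k l k' l' : ℕ} (p : P k l) (p' : P k' l'),
    HEq (actL (cPerm l l') (hmul p p'))
      (actR (hmul p' p) ((finCongr (Nat.add_comm k k')).permCongr (cPerm k k')))
  /-- the partial trace maps `t_{i,j} : P(k+1, l+1) → P(k,l)` (0-indexed) -/
  tr : ∀ {k l : ℕ}, Fin (k + 1) → Fin (l + 1) → P (k + 1) (l + 1) → P k l
  tr_tr₁ : ∀ {k l : ℕ} (p : P (k + 2) (l + 2)) (i : Fin (k + 2)) (j : Fin (l + 2))
    (i' : Fin (k + 1)) (j' : Fin (l + 1))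
    (hi : (i' : ℕ) < (i : ℕ)) (hj : (j' : ℕ) < (j : ℕ)),
    tr i' j' (tr i j p)
      = tr ⟨(i : ℕ) - 1, by have := i.isLt; omega⟩ ⟨(j : ℕ) - 1, by have := j.isLt; omega⟩
          (tr i'.castSucc j'.castSucc p)
  tr_tr₂ : ∀ {k l : ℕ} (p : P (k + 2) (l + 2)) (i : Fin (k + 2)) (j : Fin (l + 2))
    (i' : Fin (k + 1)) (j' : Fin (l + 1))
    (hi : (i : ℕ) ≤ (i' : ℕ)) (hj : (j' : ℕ) < (j : ℕ)),
    tr i' j' (tr i j p)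
      = tr ⟨(i : ℕ), by have := i'.isLt; omega⟩ ⟨(j : ℕ) - 1, by have := j.isLt; omega⟩
          (tr i'.succ j'.castSucc p)
  tr_tr₃ : ∀ {k l : ℕ} (p : P (k + 2) (l + 2)) (i : Fin (k + 2)) (j : Fin (l + 2))
    (i' : Fin (k + 1)) (j' : Fin (l + 1))
    (hi : (i' : ℕ) < (i : ℕ)) (hj : (j : ℕ) ≤ (j' : ℕ)),
    tr i' j' (tr i j p)
      = tr ⟨(i : ℕ) - 1, by have := i.isLt; omega⟩ ⟨(j : ℕ), by have := j'.isLt; omega⟩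
          (tr i'.castSucc j'.succ p)
  tr_tr₄ : ∀ {k l : ℕ} (p : P (k + 2) (l + 2)) (i : Fin (k + 2)) (j : Fin (l + 2))
    (i' : Fin (k + 1)) (j' : Fin (l + 1))
    (hi : (i : ℕ) ≤ (i' : ℕ)) (hj : (j : ℕ) ≤ (j' : ℕ)),
    tr i' j' (tr i j p)
      = tr ⟨(i : ℕ), by have := i'.isLt; omega⟩ ⟨(j : ℕ), by have := j'.isLt; omega⟩
          (tr i'.succ j'.succ p)
  tr_equivariant : ∀ {k l : ℕ} (p : P (k + 1) (l + 1))
    (σ : Equiv.Perm (Fin (l + 1))) (τ : Equiv.Perm (Fin (k + 1)))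
    (i : Fin (k + 1)) (j : Fin (l + 1)),
    tr i j (actL σ (actR p τ))
      = actL (delPerm σ j) (actR (tr (τ i) (σ⁻¹ j) p) (delPerm τ i))

/-- A TRAP: a `PreTRAP` whose partial trace maps are moreover compatible with the
horizontal concatenation (Axiom 3(c)):  `t_{i,j}(p * p') = t_{i,j}(p) * p'` for
`i ≤ k`, `j ≤ l`, and `t_{i,j}(p * p') = p * t_{i−k,j−l}(p')` for `i > k`, `j > l`. -/
structure TRAP extends PreTRAP where
  tr_hmul_left : ∀ {k l k' l' : ℕ} (p : P (k + 1) (l + 1)) (p' : P (k' + 1) (l' + 1))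
    (i : Fin (k + 1)) (j : Fin (l + 1)),
    cast (congrArg₂ P (show (k + 1) + k' = k + (k' + 1) by omega)
        (show (l + 1) + l' = l + (l' + 1) by omega))
      (tr (⟨(i : ℕ), by have := i.isLt; omega⟩ : Fin ((k + 1) + k' + 1))
        (⟨(j : ℕ), by have := j.isLt; omega⟩ : Fin ((l + 1) + l' + 1))
        (hmul p p' : P ((k + 1) + (k' + 1)) ((l + 1) + (l' + 1))))
      = hmul (tr i j p) p'
  tr_hmul_right : ∀ {k l k' l' : ℕ} (p : P (k + 1) (l + 1)) (p' : P (k' + 1) (l' + 1))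
    (i' : Fin (k' + 1)) (j' : Fin (l' + 1)),
    tr (⟨(k + 1) + (i' : ℕ), by have := i'.isLt; omega⟩ : Fin ((k + 1) + k' + 1))
        (⟨(l + 1) + (j' : ℕ), by have := j'.isLt; omega⟩ : Fin ((l + 1) + l' + 1))
        (hmul p p' : P ((k + 1) + (k' + 1)) ((l + 1) + (l' + 1)))
      = hmul p (tr i' j' p')

namespace PreTRAP

variable (T : PreTRAP) {k l : ℕ}

theorem actL_actR_actL_inv_actR_inv (σ : Perm (Fin l)) (τ : Perm (Fin k)) (p : T.P k l) :
    T.actL σ (T.actR (T.actL σ⁻¹ (T.actR p τ⁻¹)) τ) = p := by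
  rw [T.actLR, T.actL_mul, mul_inv_cancel, T.actL_one, T.actR_mul, inv_mul_cancel, T.actR_one]

theorem tr_eq_actL_actR_tr (σ : Perm (Fin (l + 1))) (τ : Perm (Fin (k + 1)))
    (i : Fin (k + 1)) (j : Fin (l + 1)) (p : T.P (k + 1) (l + 1)) :
    T.tr i j p = T.actL (delPerm σ j)
      (T.actR (T.tr (τ i) (σ⁻¹ j) (T.actL σ⁻¹ (T.actR p τ⁻¹))) (delPerm τ i)) := by
  rw [← T.tr_equivariant, T.actL_actR_actL_inv_actR_inv]

/-- The outer factors `(j₀ j)_j` and `(i₀ i)_i` are in general longer cycles, not transpositions: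
deleting the letter `3` from the word `3120` of `(0 3)` leaves `120`. -/
theorem tr_eq_actL_swap_actR_swap_tr (i₀ i : Fin (k + 1)) (j₀ j : Fin (l + 1))
    (p : T.P (k + 1) (l + 1)) :
    T.tr i j p = T.actL (delPerm (swap j₀ j) j)
      (T.actR (T.tr i₀ j₀ (T.actL (swap j₀ j) (T.actR p (swap i₀ i))))
        (delPerm (swap i₀ i) i)) := by
  simpa only [swap_inv, swap_apply_right] using
    T.tr_eq_actL_actR_tr (swap j₀ j) (swap i₀ i) i j p

end PreTRAP

theorem morphism_of_t11_general (T U : PreTRAP) {k l : ℕ}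
    (f : T.P (k + 1) (l + 1) → U.P (k + 1) (l + 1)) (g : T.P k l → U.P k l)
    (hf : ∀ (σ : Perm (Fin (l + 1))) (τ : Perm (Fin (k + 1))) (x : T.P (k + 1) (l + 1)),
      f (T.actL σ (T.actR x τ)) = U.actL σ (U.actR (f x) τ))
    (hg : ∀ (σ : Perm (Fin l)) (τ : Perm (Fin k)) (x : T.P k l),
      g (T.actL σ (T.actR x τ)) = U.actL σ (U.actR (g x) τ))
    (i₀ : Fin (k + 1)) (j₀ : Fin (l + 1))
    (htr : ∀ x : T.P (k + 1) (l + 1), g (T.tr i₀ j₀ x) = U.tr i₀ j₀ (f x))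
    (i : Fin (k + 1)) (j : Fin (l + 1)) (x : T.P (k + 1) (l + 1)) :
    g (T.tr i j x) = U.tr i j (f x) := by
  rw [T.tr_eq_actL_swap_actR_swap_tr i₀ i j₀ j, hg, htr, hf,
    ← U.tr_eq_actL_swap_actR_swap_tr i₀ i j₀ j]

/-- Let `P` and `Q` be TRAPs and `φ : P → Q` a family of maps compatible with the
`S × S^{op}`-actions, with the horizontal concatenation and its unit, and satisfying
`t_{1,1} ∘ φ = φ ∘ t_{1,1}`.  Then `φ` commutes with every partial trace map
`t_{i,j}`, so `φ` is a morphism of TRAPs. -/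
theorem morphism_of_t11 (T U : TRAP) (φ : ∀ {k l : ℕ}, T.P k l → U.P k l)
    (hact : ∀ {k l : ℕ} (σ : Equiv.Perm (Fin l)) (τ : Equiv.Perm (Fin k)) (x : T.P k l),
      φ (T.actL σ (T.actR x τ)) = U.actL σ (U.actR (φ x) τ))
    (hI0 : φ T.I0 = U.I0)
    (hconcat : ∀ {k l k' l' : ℕ} (x : T.P k l) (y : T.P k' l'),
      φ (T.hmul x y) = U.hmul (φ x) (φ y))
    (h11 : ∀ {k l : ℕ} (x : T.P (k + 1) (l + 1)),
      φ (T.tr 0 0 x) = U.tr 0 0 (φ x)) :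
    ∀ {k l : ℕ} (i : Fin (k + 1)) (j : Fin (l + 1)) (x : T.P (k + 1) (l + 1)),
      φ (T.tr i j x) = U.tr i j (φ x) := by
  exact morphism_of_t11_general T.toPreTRAP U.toPreTRAP φ φ hact hact 0 0 h11
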